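/- Suppose Γ is additively closed and π and all elements of Γ are algebraic over K, and let ξ ∈ A_v be algebraic over K. Then Γ + ξ := {γ + ξ : γ ∈ Γ} is a complete set of representatives of A_v/πA_v, and for every x ∈ K_v with expansion x = ∑_{n≥m} b_n πⁿ with respect to (Γ + ξ, π), x is algebraic over K if and only if the sequence {b_n}_{n≥m} is p-automatic; that is, (Γ + ξ, π) has property B. -/

import Mathlib

/-!
Common setup: `Kv` is a complete field equipped with a (normalized, `ℤ`-valued)
valuation `Valued.v : Kv → ℤₘ₀ = WithZero (Multiplicative ℤ)`, and `K` is a dense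
subfield of `Kv` (so that `Kv` is the completion `K_v` of `K`).  The valuation is
written multiplicatively: the additive valuation of `x` is `n` iff
`Valued.v x = ofAdd (-n)`; the valuation ring `A_v` is `{x | Valued.v x ≤ 1}` and
`π A_v = {x | Valued.v x ≤ Valued.v π}`.
-/

open scoped Multiplicative

/-- The multiplicative value monoid `ℤₘ₀` for normalized `ℤ`-valued valuations. -/
abbrev ZM0 : Type := WithZero (Multiplicative ℤ)

/-- A sequence `b : ℕ → α` is `k`-automatic if its `k`-kernel
`{ (b (n k^i + j))_n : i ≥ 0, 0 ≤ j < k^i }` is finite. -/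
def IsKAutomatic {α : Type*} (k : ℕ) (b : ℕ → α) : Prop :=
  {c : ℕ → α | ∃ i j : ℕ, j < k ^ i ∧ c = fun n => b (n * k ^ i + j)}.Finite

/-- The sequence `{a n}_{n ≥ m}` is ultimately periodic: there are `N ≥ m` and
`L > 0` with `a (n + L) = a n` for all `n ≥ N`. -/
def UltimatelyPeriodic {α : Type*} (m : ℤ) (a : ℤ → α) : Prop :=
  ∃ N L : ℤ, m ≤ N ∧ 0 < L ∧ ∀ n : ℤ, N ≤ n → a (n + L) = a n

variable {Kv : Type*} [Field Kv] [Valued Kv ZM0]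

/-- `x = ∑_{n ≥ m} a_n π^n` is the expansion of `x` with respect to `(Γ, π)`:
all digits `a n` for `n ≥ m` lie in `Γ` and the series converges to `x`. -/
def IsExpansion (π : Kv) (Γ : Set Kv) (m : ℤ) (a : ℤ → Kv) (x : Kv) : Prop :=
  (∀ n : ℤ, m ≤ n → a n ∈ Γ) ∧
    HasSum (fun n : ℕ => a (m + n) * π ^ (m + (n : ℤ))) x

/-- `Γ ⊆ A_v` is a complete set of representatives of `A_v / π A_v`: reduction
modulo `π A_v` maps `Γ` bijectively onto `A_v / π A_v`. -/
def IsCompleteSetOfReps (π : Kv) (Γ : Set Kv) : Prop :=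
  (∀ γ ∈ Γ, Valued.v γ ≤ 1) ∧
    ∀ x : Kv, Valued.v x ≤ 1 → ∃! γ, γ ∈ Γ ∧ Valued.v (x - γ) ≤ Valued.v π

/-- `(Γ, π)` has property A: for every `x ∈ K_v`, `x` is rational (i.e. `x ∈ K`)
iff the digit sequence of the expansion of `x` w.r.t. `(Γ, π)` is ultimately
periodic. -/
def HasPropertyA (K : Subfield Kv) (π : Kv) (Γ : Set Kv) : Prop :=
  ∀ (x : Kv) (m : ℤ) (a : ℤ → Kv), IsExpansion π Γ m a x →
    (x ∈ K ↔ UltimatelyPeriodic m a)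

/-- `(Γ, π)` has property B: for every `x ∈ K_v`, `x` is algebraic over `K` iff
the digit sequence of the expansion of `x` w.r.t. `(Γ, π)` is `p`-automatic. -/
def HasPropertyB (p : ℕ) (K : Subfield Kv) (π : Kv) (Γ : Set Kv) : Prop :=
  ∀ (x : Kv) (m : ℤ) (a : ℤ → Kv), IsExpansion π Γ m a x →
    (IsAlgebraic ↥K x ↔ IsKAutomatic p fun n : ℕ => a (m + n))

/-- The degree `[S : F]` of a subset `S ⊆ Kv` over a subfield `F ⊆ Kv` (intended
for `F ⊆ S` with `S` a field): the rank of the `F`-span of `S` in `Kv`. -/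
noncomputable def degOver (F : Subfield Kv) (S : Set Kv) : Cardinal :=
  Module.rank ↥F ↥(Submodule.span ↥F S)

/-- `Kv` is the completion of a global function field `K` of characteristic `p`
with respect to a normalized nontrivial valuation:  `Kv` has characteristic `p`
and is complete, `K` is dense in `Kv`, the valuation takes every value `ofAdd n`
(`n ∈ ℤ`) on `K` (normalization/nontriviality), and `K` contains an element `x₀`
transcendental over the prime field `𝔽_p = ⊥` with `[K : 𝔽_p(x₀)] < ∞`. -/
structure IsGlobalFunctionFieldCompletion (p : ℕ) (K : Subfield Kv) : Prop where
  charP : CharP Kv p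
  complete : CompleteSpace Kv
  dense : Dense (K : Set Kv)
  normalized : ∀ n : ℤ, ∃ x ∈ K,
    Valued.v x = ((Multiplicative.ofAdd n : Multiplicative ℤ) : ZM0)
  globalFunctionField : ∃ x₀ ∈ K, Transcendental (⊥ : Subfield Kv) x₀ ∧
    degOver (Subfield.closure {x₀}) (K : Set Kv) < Cardinal.aleph0

/-- The constant field `𝔽_q` of `K`: the algebraic closure of `𝔽_p` in `K`,
i.e. the elements of `K` fixed by some positive power of the Frobenius. -/
def ConstantField (p : ℕ) (K : Subfield Kv) : Set Kv :=
  {x : Kv | x ∈ K ∧ ∃ n : ℕ, 0 < n ∧ x ^ p ^ n = x}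

/-- The subfield `𝔽_q(π)` of `Kv` generated by `π` over the constant field. -/
def FqPi (p : ℕ) (K : Subfield Kv) (π : Kv) : Subfield Kv :=
  Subfield.closure (ConstantField p K ∪ {π})

/-- `𝔽_q((π))`: the completion of `𝔽_q(π)`, i.e. its closure in `Kv`. -/
noncomputable def FqPiCompletion (p : ℕ) (K : Subfield Kv) (π : Kv) : Subfield Kv :=
  (FqPi p K π).topologicalClosure

/-!
An additively closed `Γ` is an `𝔽_p`-subspace `W` of `K_v`, and `W` is finite-dimensional because
`K` lies in a finite extension of `𝔽_p(π)` that is dense in `K_v`. Expanding digits in an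
`𝔽_p`-basis of `W` shows that this basis is also a basis of `K_v` over `𝔽_p((π))`, and that the
coordinates of `∑ γₙ πⁿ` are the power series in `π` formed from the coordinates of the digits.

A combination of the basis is algebraic over `𝔽_p(π)` exactly when its coordinates are: any finite
set of algebraic elements lies in a simple extension `𝔽_p(π)(γ)`, since `𝔽_p` is perfect and the
transcendence degree is one, and the degree of `γ` over the algebraic closure of `𝔽_p(π)` in
`𝔽_p((π))` equals its degree over `𝔽_p((π))`. Christol's theorem then applies to each coordinate.

Christol's theorem rests on the Cartier operators `∑ aₙ Xⁿ ↦ ∑ a_{qn+j} Xⁿ`, whose orbits are the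
`q`-kernels. They undo `q`-th powers, `Λⱼ(g fᵠ) = Λⱼ(g) f`, while `x` is algebraic exactly when it
lies in a finite-dimensional `𝔽_q(X)`-space contained in the span of its own `q`-th powers.

Finally, subtracting `ξ` from every digit changes `x` by the algebraic element `π^m ξ / (1 - π)`.
-/

section Automatic

variable {α β ι : Type*} {k : ℕ}

theorem IsKAutomatic.comp {b : ℕ → α} (hb : IsKAutomatic k b) (f : α → β) :
    IsKAutomatic k fun n => f (b n) := by
  refine (hb.image fun c n => f (c n)).subset ?_
  rintro _ ⟨i, j, hj, rfl⟩
  exact ⟨_, ⟨i, j, hj, rfl⟩, rfl⟩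

theorem isKAutomatic_comp_iff {b : ℕ → α} {f : α → β} (hf : f.Injective) :
    (IsKAutomatic k fun n => f (b n)) ↔ IsKAutomatic k b := by
  refine ⟨fun h => ?_, fun h => h.comp f⟩
  have : Nonempty α := ⟨b 0⟩
  simpa only [Function.leftInverse_invFun hf _] using h.comp (Function.invFun f)

theorem isKAutomatic_pi_iff [Finite ι] {b : ℕ → ι → α} :
    IsKAutomatic k b ↔ ∀ i, IsKAutomatic k fun n => b n i := by
  refine ⟨fun h i => h.comp fun c => c i, fun h => ?_⟩
  refine ((Set.Finite.pi' h).image fun (c : ι → ℕ → α) n i => c i n).subset ?_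
  rintro _ ⟨i, j, hj, rfl⟩
  exact ⟨fun l n => b (n * k ^ i + j) l, fun l => ⟨i, j, hj, rfl⟩, rfl⟩

end Automatic

section FrobeniusSpan

open Submodule Polynomial FiniteField

variable {F L : Type*} [Field F] [Field L] [Algebra F L]

theorem isAlgebraic_of_forall_pow_pow_mem {V : Submodule F L} [FiniteDimensional F V] {x : L}
    {q : ℕ} (hq : 1 < q) (hx : ∀ i, x ^ q ^ i ∈ V) : IsAlgebraic F x := by
  by_contra htrans
  have hpow : LinearIndependent F fun i : ℕ => x ^ i := by
    have hinj := transcendental_iff_injective.1 htrans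
    have heval : (fun i : ℕ => x ^ i) = (aeval x).toLinearMap ∘ basisMonomials F := by
      ext i
      simp
    exact heval ▸ (basisMonomials F).linearIndependent.map' _ (LinearMap.ker_eq_bot.2 hinj)
  have hpowpow : LinearIndependent F fun i : ℕ => (⟨x ^ q ^ i, hx i⟩ : V) :=
    .of_comp V.subtype (hpow.comp _ (Nat.pow_right_injective hq))
  have := hpowpow.finite
  exact _root_.not_finite ℕ

variable (k : Type*) [Field k] [Fintype k] [Algebra k L]

local notation "q" => Fintype.card k

theorem span_image_pow_card_span (s : Set L) :
    span F ((· ^ q) '' (span F s : Set L)) = span F ((· ^ q) '' s) := by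
  refine le_antisymm (span_le.2 ?_) (span_mono (Set.image_mono subset_span))
  rintro _ ⟨x, hx, rfl⟩
  have hadd (y z : L) : (y + z) ^ q = y ^ q + z ^ q := map_add (frobeniusAlgHom k L) y z
  change x ^ q ∈ span F ((· ^ q) '' s)
  induction hx using span_induction with
  | mem y hy => exact subset_span ⟨y, hy, rfl⟩
  | zero => simp only [zero_pow Fintype.card_ne_zero, zero_mem]
  | add y z _ _ hy hz => exact hadd y z ▸ add_mem hy hz
  | smul a y _ hy => exact smul_pow a y q ▸ smul_mem _ _ hy

theorem span_image_pow_card_eq_span_range {V : Submodule F L} {ι : Type*}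
    (b : Module.Basis ι F V) :
    span F ((· ^ q) '' (V : Set L)) = span F (Set.range fun i => (b i : L) ^ q) := by
  have hV : span F (Set.range fun i => (b i : L)) = V := by
    have hspan := congrArg (Submodule.map V.subtype) b.span_eq
    rwa [map_span, V.map_subtype_top, ← Set.range_comp] at hspan
  rw [← congrArg (fun U : Submodule F L => span F ((· ^ q) '' (U : Set L))) hV,
    span_image_pow_card_span, ← Set.range_comp]
  rfl

instance finiteDimensional_span_image_pow_card (V : Submodule F L) [FiniteDimensional F V] :
    FiniteDimensional F (span F ((· ^ q) '' (V : Set L))) := by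
  rw [span_image_pow_card_eq_span_range k (Module.finBasis F V)]
  exact .span_of_finite F (Set.finite_range _)

theorem finrank_span_image_pow_card_le (V : Submodule F L) [FiniteDimensional F V] :
    Module.finrank F (span F ((· ^ q) '' (V : Set L))) ≤ Module.finrank F V := by
  rw [span_image_pow_card_eq_span_range k (Module.finBasis F V)]
  exact (finrank_range_le_card _).trans_eq (Fintype.card_fin _)

theorem isAlgebraic_of_le_span_image_pow_card {V : Submodule F L} [FiniteDimensional F V]
    (hV : V ≤ span F ((· ^ q) '' (V : Set L))) {x : L} (hx : x ∈ V) : IsAlgebraic F x := by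
  have heq := eq_of_le_of_finrank_le hV (finrank_span_image_pow_card_le k V)
  have hpow (y : L) (hy : y ∈ V) : y ^ q ∈ V := heq ▸ subset_span ⟨y, hy, rfl⟩
  refine isAlgebraic_of_forall_pow_pow_mem (V := V) (Fintype.one_lt_card (α := k)) fun i => ?_
  induction i with
  | zero => simpa using hx
  | succ i ih => exact pow_succ q i ▸ pow_mul x (q ^ i) q ▸ hpow _ ih

theorem exists_le_span_image_pow_card_of_isAlgebraic
    (hindep : ∀ {n : ℕ} (v : Fin n → L),
      LinearIndependent F v → LinearIndependent F fun i => v i ^ q)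
    {x : L} (hx : IsAlgebraic F x) :
    ∃ V : Submodule F L, FiniteDimensional F V ∧ x ∈ V ∧
      V ≤ span F ((· ^ q) '' (V : Set L)) := by
  let V := span F (Set.range fun i : ℕ => x ^ q ^ i)
  have hfin : FiniteDimensional F V := by
    have := IntermediateField.adjoin.finiteDimensional hx.isIntegral
    refine Submodule.finiteDimensional_of_le
      (S₂ := Subalgebra.toSubmodule (IntermediateField.adjoin F {x}).toSubalgebra) (span_le.2 ?_)
    rintro _ ⟨i, rfl⟩
    exact pow_mem (IntermediateField.mem_adjoin_simple_self F x) _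
  have hpow : span F ((· ^ q) '' (V : Set L)) ≤ V := by
    rw [span_image_pow_card_span, ← Set.range_comp, span_le]
    rintro _ ⟨i, rfl⟩
    exact subset_span ⟨i + 1, by simp only [Function.comp, pow_succ, pow_mul]⟩
  have hdim : Module.finrank F V ≤ Module.finrank F (span F ((· ^ q) '' (V : Set L))) := by
    have hb := (Module.finBasis F V).linearIndependent.map' V.subtype V.ker_subtype
    rw [span_image_pow_card_eq_span_range k (Module.finBasis F V)]
    exact ((finrank_span_eq_card (hindep _ hb)).trans (Fintype.card_fin _)).ge
  exact ⟨V, hfin, subset_span ⟨0, by simp⟩, (eq_of_le_of_finrank_le hpow hdim).ge⟩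

end FrobeniusSpan

section Cartier

open PowerSeries Finset

variable {R : Type*} [CommRing R]

/-- The `j`-th Cartier (decimation) operator of base `q`, sending `∑ aₙ Xⁿ` to
`∑ a_{qn+j} Xⁿ`. For `j < q` these operators read off the components of a series in the
decomposition `f = ∑_{j < q} Xʲ fⱼ(X^q)`, and iterating them produces the `q`-kernel. -/
noncomputable def cartier (q j : ℕ) : R⟦X⟧ →+ R⟦X⟧ where
  toFun f := mk fun n => coeff (n * q + j) f
  map_zero' := by ext; simp
  map_add' f g := by ext; simp

@[simp]
theorem coeff_cartier (q j n : ℕ) (f : R⟦X⟧) :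
    coeff n (cartier q j f) = coeff (n * q + j) f := by
  simp [cartier]

variable {q : ℕ} (hq : q ≠ 0)

theorem cartier_X_pow_mul_expand {i j : ℕ} (hi : i < q) (hj : j < q) (f : R⟦X⟧) :
    cartier q i (X ^ j * expand q hq f) = if i = j then f else 0 := by
  ext n
  rw [coeff_cartier, coeff_X_pow_mul']
  split_ifs with hle heq heq
  · rw [heq, Nat.add_sub_cancel, mul_comm, coeff_expand_mul]
  · refine coeff_expand_of_not_dvd q hq f fun hdvd => heq ?_
    have hmod : j ≡ n * q + i [MOD q] := (Nat.modEq_iff_dvd' hle).2 hdvd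
    simpa [Nat.ModEq, Nat.mod_eq_of_lt hi, Nat.mod_eq_of_lt hj, eq_comm] using hmod
  · omega
  · simp

theorem sum_X_pow_mul_expand_cartier (f : R⟦X⟧) :
    ∑ j ∈ range q, X ^ j * expand q hq (cartier q j f) = f := by
  ext n
  have hmod : n % q < q := Nat.mod_lt n (Nat.pos_of_ne_zero hq)
  have hcartier := congrArg (coeff (n / q))
    (map_sum (cartier q (n % q)) (fun j => X ^ j * expand q hq (cartier q j f)) (range q))
  rw [sum_congr rfl fun j hj => cartier_X_pow_mul_expand hq hmod (mem_range.1 hj) _,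
    sum_ite_eq, if_pos (mem_range.2 hmod), coeff_cartier, coeff_cartier,
    Nat.div_add_mod'] at hcartier
  exact hcartier

theorem cartier_mul_expand {j : ℕ} (hj : j < q) (f g : R⟦X⟧) :
    cartier q j (f * expand q hq g) = cartier q j f * g := by
  conv_lhs => rw [← sum_X_pow_mul_expand_cartier hq f, sum_mul, map_sum]
  simp_rw [mul_assoc, ← map_mul]
  rw [sum_congr rfl fun i hi => cartier_X_pow_mul_expand hq hj (mem_range.1 hi) _,
    sum_ite_eq, if_pos (mem_range.2 hj)]

theorem eq_zero_of_forall_cartier_eq_zero {f : R⟦X⟧} (hq : q ≠ 0)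
    (hf : ∀ j < q, cartier q j f = 0) : f = 0 := by
  rw [← sum_X_pow_mul_expand_cartier hq f]
  exact sum_eq_zero fun j hj => by rw [hf j (mem_range.1 hj), map_zero, mul_zero]

theorem isKAutomatic_coeff_iff (hq : q ≠ 0) {f : R⟦X⟧} :
    (IsKAutomatic q fun n => coeff n f) ↔
      ∃ T : Set R⟦X⟧, T.Finite ∧ f ∈ T ∧ ∀ g ∈ T, ∀ j < q, cartier q j g ∈ T := by
  constructor
  · refine fun h => ⟨mk '' _, h.image _, ⟨_, ⟨0, 0, by simp, rfl⟩, by ext; simp⟩, ?_⟩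
    rintro _ ⟨_, ⟨i, j, hj, rfl⟩, rfl⟩ l hl
    refine ⟨_, ⟨i + 1, j + l * q ^ i, by rw [pow_succ]; nlinarith, rfl⟩, ?_⟩
    ext n
    simp only [coeff_cartier, coeff_mk]
    ring_nf
  · rintro ⟨T, hT, hf, hcartier⟩
    refine (hT.image fun g n => coeff n g).subset ?_
    rintro _ ⟨i, j, hj, rfl⟩
    induction i generalizing j with
    | zero => exact ⟨f, hf, by simp [Nat.lt_one_iff.1 hj]⟩
    | succ i ih =>
      have hpos : 0 < q ^ i := Nat.pow_pos (Nat.pos_of_ne_zero hq)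
      obtain ⟨g, hg, hgcoeff⟩ := ih (j % q ^ i) (Nat.mod_lt _ hpos)
      have hlt : j / q ^ i < q := Nat.div_lt_of_lt_mul (by rwa [← pow_succ])
      refine ⟨cartier q (j / q ^ i) g, hcartier g hg _ hlt, funext fun n => ?_⟩
      calc coeff n (cartier q (j / q ^ i) g)
          = coeff ((n * q + j / q ^ i) * q ^ i + j % q ^ i) f := by
            rw [coeff_cartier]; exact congrFun hgcoeff _
        _ = coeff (n * q ^ (i + 1) + j) f := by
            rw [add_mul, add_assoc, Nat.div_add_mod', pow_succ', mul_assoc]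

end Cartier

section DegreeLT

open PowerSeries

/-- The power series over `R` that are polynomials of degree less than `N`. -/
def seriesDegreeLT (R : Type*) [CommRing R] (N : ℕ) : Submodule R R⟦X⟧ where
  carrier := {f | ∀ n, N ≤ n → coeff n f = 0}
  zero_mem' n _ := map_zero _
  add_mem' hf hg n hn := by rw [map_add, hf n hn, hg n hn, add_zero]
  smul_mem' c f hf n hn := by rw [coeff_smul, hf n hn, smul_zero]

variable {R : Type*} [CommRing R] {M N : ℕ} {f g : R⟦X⟧}

theorem coe_mem_seriesDegreeLT {P : Polynomial R} (hP : P.natDegree < N) :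
    (P : R⟦X⟧) ∈ seriesDegreeLT R N := fun n hn => by
  rw [Polynomial.coeff_coe, Polynomial.coeff_eq_zero_of_natDegree_lt (hP.trans_le hn)]

theorem exists_forall_coe_mem_seriesDegreeLT {ι : Type*} [Finite ι] (P : ι → Polynomial R) :
    ∃ N, ∀ i, (P i : R⟦X⟧) ∈ seriesDegreeLT R N := by
  obtain ⟨N, hN⟩ := (Set.finite_range fun i => (P i).natDegree).bddAbove
  exact ⟨N + 1, fun i => coe_mem_seriesDegreeLT (Nat.lt_succ_of_le (hN ⟨i, rfl⟩))⟩

theorem exists_coe_eq_of_mem_seriesDegreeLT (hf : f ∈ seriesDegreeLT R N) :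
    ∃ P : Polynomial R, (P : R⟦X⟧) = f := by
  refine ⟨trunc N f, ?_⟩
  ext n
  rw [Polynomial.coeff_coe, coeff_trunc]
  split_ifs with hn
  · rfl
  · exact (hf n (not_lt.1 hn)).symm

theorem mul_mem_seriesDegreeLT (hf : f ∈ seriesDegreeLT R M) (hg : g ∈ seriesDegreeLT R N) :
    f * g ∈ seriesDegreeLT R (M + N) := fun n hn => by
  rw [coeff_mul]
  refine Finset.sum_eq_zero fun ⟨i, j⟩ hij => ?_
  have hsum : i + j = n := Finset.HasAntidiagonal.mem_antidiagonal.1 hij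
  obtain hi | hj : M ≤ i ∨ N ≤ j := by omega
  · simp only [hf i hi, zero_mul]
  · simp only [hg j hj, mul_zero]

theorem cartier_mem_seriesDegreeLT {q : ℕ} (hMN : M ≤ N * q) (hf : f ∈ seriesDegreeLT R M)
    (j : ℕ) : cartier q j f ∈ seriesDegreeLT R N := fun n hn => by
  rw [coeff_cartier]
  exact hf _ (by nlinarith)

theorem finite_seriesDegreeLT [Finite R] (N : ℕ) :
    (seriesDegreeLT R N : Set R⟦X⟧).Finite := by
  refine .of_injOn (f := fun f (i : Fin N) => coeff (i : ℕ) f) (Set.mapsTo_univ _ _)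
    (fun f hf g hg hfg => ?_) Set.finite_univ
  ext n
  obtain hn | hn := lt_or_ge n N
  · exact congrFun hfg ⟨n, hn⟩
  · rw [hf n hn, hg n hn]

end DegreeLT

section Christol

open PowerSeries Submodule
open scoped LaurentSeries RatFunc Polynomial

theorem coe_smul_laurentSeries {R : Type*} [CommRing R] (P : R[X]) (x : R⸨X⸩) :
    (P : R⟦X⟧) • x = P • x := by
  simp only [Algebra.smul_def, HahnSeries.algebraMap_apply', algebraMap_apply',
    Algebra.algebraMap_self, PowerSeries.map_id, RingHom.id_apply, id]

variable {k : Type*} [Field k] [Fintype k]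

local notation "q" => Fintype.card k

theorem expand_card_eq_pow (f : k⟦X⟧) : expand q Fintype.card_ne_zero f = f ^ q := by
  obtain ⟨p, _, n, hp, hcard⟩ := FiniteField.card' k
  have : ExpChar k p := .prime hp
  have hfrob : iterateFrobenius k p n = RingHom.id k :=
    RingHom.ext fun a => by rw [iterateFrobenius_def, ← hcard, FiniteField.pow_card]; rfl
  have hexpand := MvPowerSeries.map_iterateFrobenius_expand p hp.ne_zero f n
  simp only [hfrob, MvPowerSeries.map_id, ← hcard] at hexpand
  exact hexpand

theorem algebraMap_cartier_of_eq_sum_smul_pow_card {ι : Type*} [Fintype ι] {g : k⟦X⟧}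
    {c : ι → k⟦X⟧} {v : ι → k⸨X⸩} (hg : algebraMap k⟦X⟧ k⸨X⸩ g = ∑ i, c i • v i ^ q) {j : ℕ}
    (hj : j < q) : algebraMap k⟦X⟧ k⸨X⸩ (cartier q j g) = ∑ i, cartier q j (c i) • v i := by
  obtain ⟨δ, hδ⟩ := IsLocalization.exist_integer_multiples_of_finite (nonZeroDivisors k⟦X⟧) v
  choose D hD using hδ
  have hδ0 : algebraMap k⟦X⟧ k⸨X⸩ δ ≠ 0 := IsFractionRing.to_map_ne_zero_of_mem_nonZeroDivisors δ.2
  have hpow : g * δ ^ q = ∑ i, c i * D i ^ q := by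
    apply IsFractionRing.injective k⟦X⟧ k⸨X⸩
    simp only [map_mul, map_pow, map_sum, hg, hD, Finset.sum_mul, Algebra.smul_def, mul_pow]
    exact Finset.sum_congr rfl fun i _ => by ring
  simp only [← expand_card_eq_pow] at hpow
  have hcartier := congrArg (algebraMap k⟦X⟧ k⸨X⸩) (congrArg (cartier q j) hpow)
  simp only [map_sum, cartier_mul_expand _ hj, map_mul, hD] at hcartier
  apply mul_right_cancel₀ hδ0
  rw [hcartier, Finset.sum_mul]
  refine Finset.sum_congr rfl fun i _ => ?_
  rw [Algebra.smul_def, Algebra.smul_def]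
  ring

theorem linearIndependent_pow_card {ι : Type*} [Finite ι] {v : ι → k⸨X⸩}
    (hv : LinearIndependent (RatFunc k) v) : LinearIndependent (RatFunc k) fun i => v i ^ q := by
  have := Fintype.ofFinite ι
  rw [← LinearIndependent.iff_fractionRing k[X], Fintype.linearIndependent_iff] at hv ⊢
  intro c hc i
  have hcartier (j : ℕ) (hj : j < q) (l : ι) : cartier q j (c l : k⟦X⟧) = 0 := by
    have hpoly (l : ι) : ∃ P : k[X], (P : k⟦X⟧) = cartier q j (c l : k⟦X⟧) :=
      exists_coe_eq_of_mem_seriesDegreeLT <| cartier_mem_seriesDegreeLT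
        (Nat.le_mul_of_pos_right _ Fintype.card_pos)
        (coe_mem_seriesDegreeLT (Nat.lt_succ_self _)) j
    choose P hP using hpoly
    have hsum : algebraMap k⟦X⟧ k⸨X⸩ 0 = ∑ l, (c l : k⟦X⟧) • v l ^ q := by
      simp only [map_zero, coe_smul_laurentSeries, hc]
    have hzero := algebraMap_cartier_of_eq_sum_smul_pow_card hsum hj
    simp only [map_zero, ← hP, coe_smul_laurentSeries] at hzero
    rw [← hP, hv P hzero.symm l, Polynomial.coe_zero]
  exact Polynomial.coe_eq_zero_iff.1 <|
    eq_zero_of_forall_cartier_eq_zero Fintype.card_ne_zero fun j hj => hcartier j hj i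

-- Dividing a basis by a common denominator `δ` of its structure constants multiplies those
-- constants by `δ ^ (q - 1)`.
theorem exists_polynomial_system {V : Submodule (RatFunc k) k⸨X⸩} [FiniteDimensional (RatFunc k) V]
    (hV : V ≤ span (RatFunc k) ((· ^ q) '' (V : Set k⸨X⸩))) {x : k⸨X⸩} (hx : x ∈ V) :
    ∃ (n : ℕ) (w : Fin n → k⸨X⸩) (a : Fin n → k[X]) (B : Fin n → Fin n → k[X]),
      x = ∑ i, a i • w i ∧ ∀ i, w i = ∑ l, B i l • w l ^ q := by
  let b := Module.finBasis (RatFunc k) V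
  have hx_sum : ∑ i, b.repr ⟨x, hx⟩ i • (b i : k⸨X⸩) = x := by
    have hrepr := congrArg V.subtype (b.sum_repr ⟨x, hx⟩)
    rwa [map_sum] at hrepr
  have hb_sum (i) : ∃ β : _ → RatFunc k, ∑ l, β l • (b l : k⸨X⸩) ^ q = b i :=
    (mem_span_range_iff_exists_fun _).1 (span_image_pow_card_eq_span_range k b ▸ hV (b i).2)
  choose β hβ using hb_sum
  let coeffs := Sum.elim (b.repr ⟨x, hx⟩) fun il : Fin _ × Fin _ => β il.1 il.2
  obtain ⟨δ, hδ⟩ :=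
    IsLocalization.exist_integer_multiples_of_finite (nonZeroDivisors k[X]) coeffs
  choose A hA using hδ
  let d := algebraMap k[X] k⸨X⸩ δ
  have hd : d ≠ 0 := (map_ne_zero_iff _ (FaithfulSMul.algebraMap_injective k[X] k⸨X⸩)).2
    (nonZeroDivisors.ne_zero δ.2)
  have hA' (s) : algebraMap k[X] k⸨X⸩ (A s) = d * algebraMap (RatFunc k) k⸨X⸩ (coeffs s) := by
    rw [IsScalarTower.algebraMap_apply k[X] (RatFunc k) k⸨X⸩, hA, Algebra.smul_def, map_mul,
      ← IsScalarTower.algebraMap_apply]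
  have hdq : d ^ q = d * d * d ^ (q - 2) := by
    rw [← pow_two, ← pow_add, Nat.add_sub_cancel' (Fintype.one_lt_card (α := k))]
  refine ⟨_, fun i => d⁻¹ * b i, fun i => A (.inl i),
    fun i l => A (.inr (i, l)) * δ ^ (q - 2), ?_, fun i => ?_⟩
  · rw [← hx_sum]
    refine Finset.sum_congr rfl fun i _ => ?_
    rw [Algebra.smul_def, Algebra.smul_def, hA']
    simp only [coeffs, Sum.elim_inl]
    field_simp
  · beta_reduce
    rw [← hβ i, Finset.mul_sum]
    refine Finset.sum_congr rfl fun l _ => ?_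
    rw [Algebra.smul_def, Algebra.smul_def, map_mul, map_pow, hA', mul_pow, inv_pow, hdq]
    simp only [coeffs, Sum.elim_inr]
    field_simp
    rfl

theorem isKAutomatic_of_polynomial_system {ι : Type*} [Fintype ι] {w : ι → k⸨X⸩} {G : k⟦X⟧}
    {a : ι → k[X]} {B : ι → ι → k[X]}
    (hG : algebraMap k⟦X⟧ k⸨X⸩ G = ∑ i, a i • w i) (hw : ∀ i, w i = ∑ l, B i l • w l ^ q) :
    IsKAutomatic q fun n => coeff n G := by
  obtain ⟨N, hN⟩ := exists_forall_coe_mem_seriesDegreeLT (Sum.elim a fun il : ι × ι => B il.1 il.2)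
  let C := {c : ι → k⟦X⟧ | ∀ i, c i ∈ seriesDegreeLT k N}
  refine (isKAutomatic_coeff_iff Fintype.card_ne_zero).2
    ⟨algebraMap k⟦X⟧ k⸨X⸩ ⁻¹' ((fun c => ∑ i, c i • w i) '' C), ?_, ?_, ?_⟩
  · exact ((Set.Finite.pi' fun _ => finite_seriesDegreeLT N).image _).preimage
      (IsFractionRing.injective k⟦X⟧ k⸨X⸩).injOn
  · exact ⟨fun i => a i, fun i => hN (.inl i), by simp only [coe_smul_laurentSeries, hG]⟩
  · rintro g ⟨c, hc, hg⟩ j hj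
    have hg' : algebraMap k⟦X⟧ k⸨X⸩ g = ∑ l, (∑ i, c i * (B i l : k⟦X⟧)) • w l ^ q := by
      simp only [Finset.sum_smul, mul_smul, coe_smul_laurentSeries]
      rw [Finset.sum_comm, ← hg]
      exact Finset.sum_congr rfl fun i _ => by rw [← Finset.smul_sum, ← hw]
    refine ⟨fun l => cartier q j (∑ i, c i * (B i l : k⟦X⟧)), fun l => ?_,
      (algebraMap_cartier_of_eq_sum_smul_pow_card hg' hj).symm⟩
    refine cartier_mem_seriesDegreeLT (M := N + N) ?_ (sum_mem fun i _ =>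
      mul_mem_seriesDegreeLT (hc i) (hN (.inr (i, l)))) j
    nlinarith [Fintype.one_lt_card (α := k)]

theorem isAlgebraic_of_isKAutomatic {G : k⟦X⟧} (hG : IsKAutomatic q fun n => coeff n G) :
    IsAlgebraic (RatFunc k) (algebraMap k⟦X⟧ k⸨X⸩ G) := by
  obtain ⟨T, hT, hGT, hcartier⟩ := (isKAutomatic_coeff_iff Fintype.card_ne_zero).1 hG
  let V := span (RatFunc k) (algebraMap k⟦X⟧ k⸨X⸩ '' T)
  have : FiniteDimensional (RatFunc k) V := .span_of_finite _ (hT.image _)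
  refine isAlgebraic_of_le_span_image_pow_card k (V := V) ?_ (subset_span ⟨G, hGT, rfl⟩)
  rw [span_image_pow_card_span, span_le]
  rintro _ ⟨f, hf, rfl⟩
  rw [← sum_X_pow_mul_expand_cartier (Fintype.card_ne_zero (α := k)) f, map_sum]
  refine sum_mem fun j hj => ?_
  have hterm : algebraMap k⟦X⟧ k⸨X⸩ (X ^ j * expand q Fintype.card_ne_zero (cartier q j f)) =
      (RatFunc.X ^ j : RatFunc k) • algebraMap k⟦X⟧ k⸨X⸩ (cartier q j f) ^ q := by
    rw [expand_card_eq_pow, map_mul, map_pow, map_pow, Algebra.smul_def, map_pow, RatFunc.coe_X]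
    simp
  rw [hterm]
  exact smul_mem _ _ (subset_span ⟨_, ⟨_, hcartier f hf j (Finset.mem_range.1 hj), rfl⟩, rfl⟩)

theorem isAlgebraic_iff_isKAutomatic_coeff {G : k⟦X⟧} :
    IsAlgebraic (RatFunc k) (algebraMap k⟦X⟧ k⸨X⸩ G) ↔ IsKAutomatic q fun n => coeff n G := by
  refine ⟨fun hG => ?_, isAlgebraic_of_isKAutomatic⟩
  obtain ⟨V, _, hGV, hV⟩ := exists_le_span_image_pow_card_of_isAlgebraic k
    (fun v hv => linearIndependent_pow_card hv) hG
  obtain ⟨n, w, a, B, hGw, hw⟩ := exists_polynomial_system hV hGV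
  exact isKAutomatic_of_polynomial_system hGw hw

end Christol

section SimpleExtension

open IntermediateField

variable {F M : Type*} [Field F] [Field M] [Algebra F M]

theorem eq_adjoin_simple_of_adjoin_eq_top {S : IntermediateField F M} {β : S} (h : F⟮β⟯ = ⊤) :
    S = F⟮(β : M)⟯ := by
  rw [← lift_adjoin_simple, h, lift_top]

theorem exists_mem_adjoin_simple_add_smul [Infinite F] {a b : M} (ha : IsSeparable F a)
    (hb : IsSeparable F b) {f : F → F} (hf : f.Injective) : ∃ c, b ∈ F⟮a + f c • b⟯ := by
  have := isSeparable_adjoin_pair_of_isSeparable F M ha hb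
  have := finiteDimensional_adjoin_pair ha.isIntegral hb.isIntegral
  have : Finite (IntermediateField F F⟮a, b⟯) :=
    Field.finite_intermediateField_of_exists_primitive_element F _
      (Field.exists_primitive_element F F⟮a, b⟯)
  let a' : F⟮a, b⟯ := ⟨a, subset_adjoin F _ (by simp)⟩
  let b' : F⟮a, b⟯ := ⟨b, subset_adjoin F _ (by simp)⟩
  obtain ⟨c, d, hcd, heq⟩ := Finite.exists_ne_map_eq_of_infinite fun c => F⟮a' + f c • b'⟯
  have heq' : F⟮a + f c • b⟯ = F⟮a + f d • b⟯ := by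
    have hlift := congrArg IntermediateField.lift heq
    rwa [lift_adjoin_simple, lift_adjoin_simple] at hlift
  have hsmul : (f c - f d) • b ∈ F⟮a + f c • b⟯ := by
    have hc := mem_adjoin_simple_self F (a + f c • b)
    have hd := heq' ▸ mem_adjoin_simple_self F (a + f d • b)
    simpa only [add_sub_add_left_eq_sub, ← sub_smul] using sub_mem hc hd
  refine ⟨c, ?_⟩
  simpa only [inv_smul_smul₀ (sub_ne_zero.2 (hf.ne hcd))] using
    F⟮a + f c • b⟯.smul_mem (x := (f c - f d)⁻¹) hsmul

theorem exists_adjoin_pair_eq_adjoin_simple [Infinite F] [Algebra.IsAlgebraic F M] (α : M)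
    {β : M} (hβ : IsSeparable F β) : ∃ γ : M, F⟮α, β⟯ = F⟮γ⟯ := by
  obtain ⟨p, hp⟩ := ExpChar.exists F
  have : ExpChar M p := expChar_of_injective_algebraMap (algebraMap F M).injective p
  obtain ⟨n, s, hs⟩ := IsPurelyInseparable.pow_mem (separableClosure F M) p α
  have hα : IsSeparable F (α ^ p ^ n) := hs ▸ mem_separableClosure_iff.1 s.2
  have hβpow : IsSeparable F (β ^ p ^ n) :=
    mem_separableClosure_iff.1 (pow_mem (mem_separableClosure_iff.2 hβ) _)
  obtain ⟨c, hc⟩ := exists_mem_adjoin_simple_add_smul hα hβpow (iterateFrobenius_inj F p n)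
  have hle : F⟮α ^ p ^ n + iterateFrobenius F p n c • β ^ p ^ n⟯ ≤ F⟮α + c • β⟯ := by
    rw [adjoin_simple_le_iff, iterateFrobenius_def, ← smul_pow, ← add_pow_expChar_pow]
    exact pow_mem (mem_adjoin_simple_self F _) _
  have hβmem : β ∈ F⟮α + c • β⟯ := by
    rw [← adjoin_simple_le_iff,
      adjoin_simple_eq_adjoin_pow_expChar_pow_of_isSeparable F M hβ p n, adjoin_simple_le_iff]
    exact hle hc
  have hαmem : α ∈ F⟮α + c • β⟯ := by
    simpa only [add_sub_cancel_right] using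
      sub_mem (mem_adjoin_simple_self F (α + c • β)) (F⟮α + c • β⟯.smul_mem (x := c) hβmem)
  refine ⟨α + c • β, le_antisymm (adjoin_le_iff.2 (Set.pair_subset hαmem hβmem)) ?_⟩
  rw [adjoin_simple_le_iff]
  exact add_mem (subset_adjoin F _ (by simp)) (smul_mem _ (subset_adjoin F _ (by simp)))

variable {k : Type*} [Field k] [Algebra k F] [Algebra k M] [IsScalarTower k F M]

-- Over `F(t, Mₛ)`, where `Mₛ` is the separable closure of `F` in `M`, the field `M` is both
-- separable and purely inseparable.
theorem exists_adjoin_simple_eq_top_of_isSeparable [Infinite F] [FiniteDimensional F M] (t : M)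
    [Algebra.IsSeparable k⟮t⟯ M] : ∃ γ : M, F⟮γ⟯ = ⊤ := by
  obtain ⟨β, hβ⟩ := Field.exists_primitive_element F (separableClosure F M)
  obtain ⟨γ, hγ⟩ :=
    exists_adjoin_pair_eq_adjoin_simple t (mem_separableClosure_iff.1 β.2 : IsSeparable F (β : M))
  refine ⟨γ, hγ ▸ eq_top_iff.2 fun x _ => ?_⟩
  let N := F⟮t, (β : M)⟯
  have hkt : k⟮t⟯ ≤ N.restrictScalars k :=
    adjoin_simple_le_iff.2 (subset_adjoin F _ (by simp))
  have hsep : separableClosure F M ≤ N := by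
    rw [eq_adjoin_simple_of_adjoin_eq_top hβ, adjoin_simple_le_iff]
    exact subset_adjoin F _ (by simp)
  have : IsPurelyInseparable N M := (separableClosure_le_iff _ _ N).1 hsep
  let _ : Algebra k⟮t⟯ N := (IntermediateField.inclusion hkt).toRingHom.toAlgebra
  have : IsScalarTower k⟮t⟯ N M := .of_algebraMap_eq fun _ => rfl
  obtain ⟨y, hy⟩ := IsPurelyInseparable.inseparable N x
    ((Algebra.IsSeparable.isSeparable k⟮t⟯ x).tower_top N)
  exact hy ▸ y.2

theorem exists_adjoin_simple_eq_top_of_trdeg_eq_one [PerfectField k] [Infinite F]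
    [Algebra.IsAlgebraic F M] [Algebra.EssFiniteType k M] (htrdeg : Algebra.trdeg k M = 1) :
    ∃ γ : M, F⟮γ⟯ = ⊤ := by
  have : Algebra.EssFiniteType F M := .of_comp k F M
  have : FiniteDimensional F M := Algebra.finite_of_essFiniteType_of_isAlgebraic
  obtain ⟨s, hs, hsep⟩ := exists_isTranscendenceBasis_and_isSeparable_of_perfectField k M
  have hcard : s.card = 1 := by
    have hmk := hs.cardinalMk_eq_trdeg.trans htrdeg
    simpa using hmk
  obtain ⟨t, rfl⟩ := Finset.card_eq_one.1 hcard
  rw [Finset.coe_singleton] at hsep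
  exact exists_adjoin_simple_eq_top_of_isSeparable (k := k) t

end SimpleExtension

section SimpleExtensionRatFunc

open IntermediateField
open scoped Polynomial

variable {k Ω : Type*} [Field k] [Field Ω] [Algebra (RatFunc k) Ω]

theorem trdeg_eq_one_of_isAlgebraic_ratFunc [Algebra k Ω] [IsScalarTower k (RatFunc k) Ω]
    [Algebra.IsAlgebraic (RatFunc k) Ω] : Algebra.trdeg k Ω = 1 := by
  let _ : Algebra k[X] Ω := ((algebraMap (RatFunc k) Ω).comp (algebraMap k[X] _)).toAlgebra
  have : IsScalarTower k[X] (RatFunc k) Ω := .of_algebraMap_eq fun _ => rfl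
  have : IsScalarTower k k[X] Ω := .of_algebraMap_eq fun a => by
    rw [IsScalarTower.algebraMap_apply k (RatFunc k), IsScalarTower.algebraMap_apply k k[X]]; rfl
  have : FaithfulSMul k[X] Ω := .trans k[X] (RatFunc k) Ω
  have : Algebra.IsAlgebraic k[X] Ω := (IsFractionRing.comap_isAlgebraic_iff (K := RatFunc k)).2 ‹_›
  have htrdeg := lift_trdeg_add_eq k k[X] Ω
  rw [Polynomial.trdeg_of_isDomain, trdeg_eq_zero] at htrdeg
  simpa using htrdeg.symm

theorem exists_isAlgebraic_subset_adjoin_simple [PerfectField k] {S : Set Ω} (hS : S.Finite)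
    (halg : ∀ x ∈ S, IsAlgebraic (RatFunc k) x) :
    ∃ γ : Ω, IsAlgebraic (RatFunc k) γ ∧ S ⊆ (RatFunc k)⟮γ⟯ := by
  let M := adjoin (RatFunc k) S
  let _ : Algebra k Ω := .compHom Ω (algebraMap k (RatFunc k))
  have : IsScalarTower k (RatFunc k) Ω := .of_algebraMap_eq fun _ => rfl
  have : Algebra.IsAlgebraic (RatFunc k) M := isAlgebraic_adjoin fun x hx => (halg x hx).isIntegral
  have : Algebra.EssFiniteType (RatFunc k) M := essFiniteType_iff.2 (fg_adjoin_of_finite hS)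
  have : Algebra.EssFiniteType k[X] (RatFunc k) := .of_isLocalization _ (nonZeroDivisors k[X])
  have : Algebra.EssFiniteType k (RatFunc k) := .comp k k[X] _
  have : Algebra.EssFiniteType k M := .comp k (RatFunc k) M
  have : Infinite (RatFunc k) := .of_injective _ (RatFunc.algebraMap_injective k)
  obtain ⟨γ, hγ⟩ := exists_adjoin_simple_eq_top_of_trdeg_eq_one (F := RatFunc k)
    (trdeg_eq_one_of_isAlgebraic_ratFunc (k := k) (Ω := M))
  refine ⟨γ, (Algebra.IsAlgebraic.isAlgebraic γ).algebraMap, ?_⟩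
  rw [← eq_adjoin_simple_of_adjoin_eq_top hγ]
  exact subset_adjoin _ S

end SimpleExtensionRatFunc

section Coordinates

open IntermediateField Polynomial

variable {F L Ω : Type*} [Field F] [Field L] [Field Ω] [Algebra F L] [Algebra F Ω] [Algebra L Ω]
  [IsScalarTower F L Ω]

theorem map_minpoly_algebraicClosure {γ : Ω} (hγ : IsAlgebraic F γ) :
    (minpoly (algebraicClosure F L) γ).map (algebraMap (algebraicClosure F L) L) = minpoly L γ := by
  have hγL : IsIntegral L γ := hγ.isIntegral.tower_top
  have hlift : minpoly L γ ∈ lifts (algebraMap (algebraicClosure F L) L) := by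
    have hint := integralClosure.mem_lifts_of_monic_of_dvd_map L (minpoly.monic hγ.isIntegral)
      (minpoly.monic hγL) (minpoly.dvd_map_of_isScalarTower F L γ)
    rw [lifts_iff_coeff_lifts] at hint ⊢
    intro n
    obtain ⟨c, hc⟩ := hint n
    exact ⟨⟨c, mem_algebraicClosure_iff.2 (IsIntegral.isAlgebraic c.2)⟩, hc⟩
  obtain ⟨g, hg⟩ := (mem_lifts _).1 hlift
  have hmonic : g.Monic :=
    monic_of_injective (algebraMap (algebraicClosure F L) L).injective (hg ▸ minpoly.monic hγL)
  have hirr : Irreducible g :=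
    hmonic.irreducible_of_irreducible_map _ g (hg ▸ minpoly.irreducible hγL)
  have hroot : aeval γ g = 0 := by rw [← aeval_map_algebraMap L, hg, minpoly.aeval]
  rw [← minpoly.eq_of_irreducible_of_monic hirr hroot hmonic, hg]

theorem finrank_adjoin_simple_algebraicClosure_le [FiniteDimensional L Ω] {γ : Ω}
    (hγ : IsAlgebraic F γ) :
    Module.finrank (algebraicClosure F L) (algebraicClosure F L)⟮γ⟯ ≤ Module.finrank L Ω := by
  have hdeg := natDegree_map (p := minpoly (algebraicClosure F L) γ)
    (algebraMap (algebraicClosure F L) L)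
  rw [map_minpoly_algebraicClosure hγ] at hdeg
  rw [adjoin.finrank hγ.isIntegral.tower_top, ← hdeg]
  exact minpoly.natDegree_le γ

variable {ι : Type*} [Fintype ι]

-- Let `E` be the algebraic closure of `F` in `L`. As `[E(γ) : E] ≤ [Ω : L]`, a basis of `Ω` over
-- `L` contained in `E(γ)` is a basis of `E(γ)` over `E`.
theorem isAlgebraic_of_sum_smul_basis_mem_adjoin_simple (b : Module.Basis ι L Ω) {γ : Ω}
    (hγ : IsAlgebraic F γ) (hb : ∀ i, b i ∈ F⟮γ⟯) {Y : ι → L} (hY : ∑ i, Y i • b i ∈ F⟮γ⟯)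
    (i : ι) : IsAlgebraic F (Y i) := by
  let E := algebraicClosure F L
  have := b.finiteDimensional_of_finite
  have := adjoin.finiteDimensional (hγ.isIntegral.tower_top : IsIntegral E γ)
  have hle {x : Ω} (hx : x ∈ F⟮γ⟯) : x ∈ E⟮γ⟯ := by
    have hadjoin : F⟮γ⟯ ≤ E⟮γ⟯.restrictScalars F :=
      adjoin_simple_le_iff.2 (mem_adjoin_simple_self E γ)
    exact hadjoin hx
  let b' : ι → E⟮γ⟯ := fun i => ⟨b i, hle (hb i)⟩
  have hindep : LinearIndependent E b' :=
    .of_comp E⟮γ⟯.val.toLinearMap (b.linearIndependent.restrict_scalars' E)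
  have hcard : Fintype.card ι = Module.finrank E E⟮γ⟯ := by
    refine le_antisymm hindep.fintype_card_le_finrank ?_
    rw [← Module.finrank_eq_card_basis b]
    exact finrank_adjoin_simple_algebraicClosure_le hγ
  have hspan : (⟨_, hle hY⟩ : E⟮γ⟯) ∈ Submodule.span E (Set.range b') :=
    hindep.span_eq_top_of_card_eq_finrank' hcard ▸ Submodule.mem_top
  obtain ⟨c, hc⟩ := (Submodule.mem_span_range_iff_exists_fun E).1 hspan
  have hsum : ∑ i, (c i : L) • b i = ∑ i, Y i • b i := by
    have hval := congrArg E⟮γ⟯.val hc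
    rwa [map_sum] at hval
  have hcoord : (c i : L) = Y i := by
    simpa only [b.repr_sum_self] using congrArg (fun x => b.repr x i) hsum
  exact hcoord ▸ mem_algebraicClosure_iff.1 (c i).2

end Coordinates

section CoordinatesRatFunc

variable {k L Ω ι : Type*} [Field k] [PerfectField k] [Field L] [Field Ω] [Algebra (RatFunc k) L]
  [Algebra (RatFunc k) Ω] [Algebra L Ω] [IsScalarTower (RatFunc k) L Ω] [Fintype ι]

theorem isAlgebraic_sum_smul_basis_iff (b : Module.Basis ι L Ω)
    (hb : ∀ i, IsAlgebraic (RatFunc k) (b i)) {Y : ι → L} :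
    IsAlgebraic (RatFunc k) (∑ i, Y i • b i) ↔ ∀ i, IsAlgebraic (RatFunc k) (Y i) := by
  refine ⟨fun hY => ?_, fun hY => mem_algebraicClosure_iff.1 <| sum_mem fun i _ =>
    mem_algebraicClosure_iff.2 ?_⟩
  · obtain ⟨γ, hγ, hsub⟩ := exists_isAlgebraic_subset_adjoin_simple
      (S := insert (∑ i, Y i • b i) (Set.range b)) ((Set.finite_range b).insert _) <| by
        rintro x (rfl | ⟨i, rfl⟩)
        exacts [hY, hb i]
    exact isAlgebraic_of_sum_smul_basis_mem_adjoin_simple b hγ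
      (fun i => hsub (.inr ⟨i, rfl⟩)) (hsub (.inl rfl))
  · rw [Algebra.smul_def]
    exact (hY i).algebraMap.mul (hb i)

end CoordinatesRatFunc

section AlgebraicTower

variable {R S Ω : Type*} [Field R] [Field S] [Field Ω] [Algebra R Ω] [Algebra S Ω]

theorem isAlgebraic_of_forall_isAlgebraic_algebraMap {x : Ω}
    (h : ∀ r : R, IsAlgebraic S (algebraMap R Ω r)) (hx : IsAlgebraic R x) : IsAlgebraic S x := by
  have hcl : ∀ r : R, algebraMap R Ω r ∈ algebraicClosure S Ω := fun r =>
    mem_algebraicClosure_iff.2 (h r)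
  let f : R →+* algebraicClosure S Ω := (algebraMap R Ω).codRestrict (algebraicClosure S Ω) hcl
  exact (hx.ringHom_of_comp_eq f (RingHom.id Ω) f.injective rfl).restrictScalars S

end AlgebraicTower

section ValuedSeries

open Filter Topology

variable {Ω Γ₀ : Type*} [Field Ω] [LinearOrderedCommGroupWithZero Γ₀] [Valued Ω Γ₀]

theorem nonarchimedeanRing_of_valued : NonarchimedeanRing Ω := by
  rw [Valued.toUniformSpace_eq Ω Γ₀]
  exact Valued.v.subgroups_basis.nonarchimedean

variable [MulArchimedean Γ₀] {π : Ω}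

theorem tendsto_mul_pow_zero (hπ : Valued.v π < 1) {a : ℕ → Ω} (ha : ∀ n, Valued.v (a n) ≤ 1) :
    Tendsto (fun n => a n * π ^ n) atTop (𝓝 0) := by
  rw [(Valued.hasBasis_nhds_zero Ω Γ₀).tendsto_right_iff]
  intro r _
  filter_upwards [(Valued.tendsto_zero_pow_of_v_lt_one hπ).eventually
    ((Valued.hasBasis_nhds_zero Ω Γ₀).mem_of_mem (i := r) trivial)] with n hn
  refine lt_of_le_of_lt ?_ hn
  rw [Valuation.restrict_le_iff, map_mul]
  exact mul_le_of_le_one_left' (ha n)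

variable [CompleteSpace Ω]

theorem summable_mul_pow (hπ : Valued.v π < 1) {a : ℕ → Ω} (ha : ∀ n, Valued.v (a n) ≤ 1) :
    Summable fun n => a n * π ^ n := by
  have : NonarchimedeanRing Ω := nonarchimedeanRing_of_valued
  refine NonarchimedeanAddGroup.summable_of_tendsto_cofinite_zero ?_
  rw [Nat.cofinite_eq_atTop]
  exact tendsto_mul_pow_zero hπ ha

theorem valuation_tsum_mul_pow_le_one (hπ : Valued.v π < 1) {a : ℕ → Ω}
    (ha : ∀ n, Valued.v (a n) ≤ 1) : Valued.v (∑' n, a n * π ^ n) ≤ 1 := by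
  refine (Valued.isClosed_integer Ω).mem_of_tendsto (summable_mul_pow hπ ha).hasSum
    (.of_forall fun s => sum_mem fun n _ => ?_)
  exact Subring.mul_mem _ (ha n) (Subring.pow_mem _ hπ.le n)

theorem tsum_mul_pow_eq_add_mul (hπ : Valued.v π < 1) {a : ℕ → Ω}
    (ha : ∀ n, Valued.v (a n) ≤ 1) :
    ∑' n, a n * π ^ n = a 0 + π * ∑' n, a (n + 1) * π ^ n := by
  rw [(summable_mul_pow hπ ha).tsum_eq_zero_add, pow_zero, mul_one, ← tsum_mul_left]
  simp only [pow_succ', mul_left_comm]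

theorem tsum_mul_pow_mul_tsum_mul_pow (hπ : Valued.v π < 1) {a b : ℕ → Ω}
    (ha : ∀ n, Valued.v (a n) ≤ 1) (hb : ∀ n, Valued.v (b n) ≤ 1) :
    (∑' n, a n * π ^ n) * ∑' n, b n * π ^ n =
      ∑' n, (∑ x ∈ Finset.HasAntidiagonal.antidiagonal n, a x.1 * b x.2) * π ^ n := by
  have : NonarchimedeanRing Ω := nonarchimedeanRing_of_valued
  have hsa := summable_mul_pow hπ ha
  have hsb := summable_mul_pow hπ hb
  have hsab := hsa.mul_of_nonarchimedean hsb
  refine (hsa.tsum_mul_tsum_eq_tsum_sum_antidiagonal hsb hsab).trans (tsum_congr fun n => ?_)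
  rw [Finset.sum_mul]
  refine Finset.sum_congr rfl fun x hx => ?_
  rw [← Finset.HasAntidiagonal.mem_antidiagonal.1 hx, pow_add, mul_mul_mul_comm]

theorem tsum_const_mul_pow (hπ : Valued.v π < 1) {ξ : Ω} (hξ : Valued.v ξ ≤ 1) :
    ∑' n : ℕ, ξ * π ^ n = ξ / (1 - π) := by
  have hne : 1 - π ≠ 0 := sub_ne_zero.2 fun h => by simp [← h] at hπ
  rw [eq_div_iff hne]
  linear_combination tsum_mul_pow_eq_add_mul hπ fun _ => hξ

end ValuedSeries

section Digits

variable {π : Kv} {Γ : Set Kv}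

theorem IsCompleteSetOfReps.exists_eq_add_mul (hΓ : IsCompleteSetOfReps π Γ) (hπ0 : π ≠ 0)
    {x : Kv} (hx : Valued.v x ≤ 1) : ∃ γ ∈ Γ, ∃ y, Valued.v y ≤ 1 ∧ x = γ + π * y := by
  obtain ⟨γ, ⟨hγ, hle⟩, -⟩ := hΓ.2 x hx
  refine ⟨γ, hγ, (x - γ) / π, ?_, by rw [mul_div_cancel₀ _ hπ0, add_sub_cancel]⟩
  rw [map_div₀]
  exact div_le_one_of_le₀ hle zero_le

theorem IsCompleteSetOfReps.exists_tsum_eq [CompleteSpace Kv] (hΓ : IsCompleteSetOfReps π Γ)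
    (hπ0 : π ≠ 0) (hπ : Valued.v π < 1) {x : Kv} (hx : Valued.v x ≤ 1) :
    ∃ γ : ℕ → Γ, ∑' n, (γ n : Kv) * π ^ n = x := by
  choose digit hdigit next hnext heq using
    fun y : {y : Kv // Valued.v y ≤ 1} => hΓ.exists_eq_add_mul hπ0 y.2
  let y : ℕ → {y : Kv // Valued.v y ≤ 1} := fun n => (fun y => ⟨next y, hnext y⟩)^[n] ⟨x, hx⟩
  have hy : ∀ n, (y n : Kv) = digit (y n) + π * y (n + 1) := fun n => by
    simp only [y, Function.iterate_succ_apply', ← heq]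
  have hpartial : ∀ n, ∑ i ∈ Finset.range n, digit (y i) * π ^ i = x - y n * π ^ n := by
    intro n
    induction n with
    | zero => simp [y]
    | succ n ih =>
      rw [Finset.sum_range_succ, ih]
      linear_combination (- π ^ n) * hy n
  refine ⟨fun n => ⟨digit (y n), hdigit _⟩, tendsto_nhds_unique
    (summable_mul_pow hπ fun n => hΓ.1 _ (hdigit (y n))).hasSum.tendsto_sum_nat ?_⟩
  simp only [hpartial]
  simpa using tendsto_const_nhds.sub (tendsto_mul_pow_zero hπ fun n => (y n).2)

end Digits

section Evaluation

open PowerSeries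
open scoped LaurentSeries RatFunc

variable {k Ω Γ₀ : Type*} [Field k] [Field Ω] [LinearOrderedCommGroupWithZero Γ₀] [Valued Ω Γ₀]
  [Algebra k Ω]

/-- The algebra structure of `Ω` over `k⟦X⟧` is the evaluation of power series at `π`. -/
def IsEvaluationAt (k : Type*) [Field k] [Algebra k Ω] [Algebra k⟦X⟧ Ω] (π : Ω) : Prop :=
  ∀ G : k⟦X⟧, algebraMap k⟦X⟧ Ω G = ∑' n, algebraMap k Ω (coeff n G) * π ^ n

section Basic

variable [Algebra k⟦X⟧ Ω] {π : Ω}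

theorem IsEvaluationAt.algebraMap_C (h : IsEvaluationAt k π) (c : k) :
    algebraMap k⟦X⟧ Ω (C c) = algebraMap k Ω c := by
  rw [h, tsum_eq_single 0 fun n hn => by simp [coeff_C, hn]]
  simp

theorem IsEvaluationAt.algebraMap_X (h : IsEvaluationAt k π) : algebraMap k⟦X⟧ Ω X = π := by
  rw [h, tsum_eq_single 1 fun n hn => by simp [coeff_X, hn]]
  simp

theorem IsEvaluationAt.algebraMap_injective (h : IsEvaluationAt k π) (hπ0 : π ≠ 0) :
    Function.Injective (algebraMap k⟦X⟧ Ω) := by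
  refine (injective_iff_map_eq_zero _).2 fun G hG => by_contra fun hG0 => ?_
  obtain ⟨n, u, rfl⟩ := IsDiscreteValuationRing.eq_unit_mul_pow_irreducible hG0 X_prime.irreducible
  rw [map_mul, map_pow, h.algebraMap_X] at hG
  exact mul_ne_zero (u.isUnit.map _).ne_zero (pow_ne_zero n hπ0) hG

variable [Algebra k⸨X⸩ Ω] [IsScalarTower k⟦X⟧ k⸨X⸩ Ω] [Algebra (RatFunc k) Ω]
  [IsScalarTower (RatFunc k) k⸨X⸩ Ω]

theorem IsEvaluationAt.algebraMap_ratFunc_X (h : IsEvaluationAt k π) :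
    algebraMap (RatFunc k) Ω RatFunc.X = π := by
  rw [IsScalarTower.algebraMap_apply (RatFunc k) k⸨X⸩ Ω, ← h.algebraMap_X,
    IsScalarTower.algebraMap_apply k⟦X⟧ k⸨X⸩ Ω]
  exact congrArg _ (RatFunc.coe_X.trans coe_X.symm)

end Basic

/-- The `k`-subspace of elements of valuation at most `r`. -/
def closedBallSubmodule (k : Type*) [Field k] [Algebra k Ω]
    [(Valued.v : Valuation Ω Γ₀).IsTrivialOn k] (r : Γ₀) : Submodule k Ω where
  __ := Valued.v.leAddSubgroup r
  smul_mem' c x hx := by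
    change Valued.v (c • x) ≤ r
    rw [Algebra.smul_def, map_mul]
    exact (mul_le_of_le_one_left' (by simp)).trans hx

variable [(Valued.v : Valuation Ω Γ₀).IsTrivialOn k] [MulArchimedean Γ₀] [CompleteSpace Ω] {π : Ω}

/-- Evaluation of power series over `k` at an element `π` of valuation less than `1`. -/
noncomputable def evaluationHom (k : Type*) [Field k] [Algebra k Ω]
    [(Valued.v : Valuation Ω Γ₀).IsTrivialOn k] (hπ : Valued.v π < 1) : k⟦X⟧ →+* Ω where
  toFun G := ∑' n, algebraMap k Ω (coeff n G) * π ^ n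
  map_zero' := by simp
  map_one' := by
    rw [tsum_eq_single 0 fun n hn => by simp [coeff_one, hn]]
    simp
  map_add' F G := by
    rw [← (summable_mul_pow hπ (by simp)).tsum_add (summable_mul_pow hπ (by simp))]
    simp only [map_add, add_mul]
  map_mul' F G := by
    rw [tsum_mul_pow_mul_tsum_mul_pow hπ (by simp) (by simp)]
    simp only [coeff_mul, map_sum, map_mul]

variable [Algebra k⟦X⟧ Ω]

theorem IsEvaluationAt.exists_eq_add_mul (h : IsEvaluationAt k π) (hπ : Valued.v π < 1)
    (G : k⟦X⟧) : ∃ w, Valued.v w ≤ 1 ∧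
      algebraMap k⟦X⟧ Ω G = algebraMap k Ω (constantCoeff G) + π * w := by
  refine ⟨_, valuation_tsum_mul_pow_le_one hπ (a := fun n => algebraMap k Ω (coeff (n + 1) G))
    (by simp), ?_⟩
  rw [h, tsum_mul_pow_eq_add_mul hπ (by simp), coeff_zero_eq_constantCoeff_apply]

variable {ι : Type*} {e : ι → Ω}

theorem IsEvaluationAt.X_dvd_of_sum_smul_eq_zero (h : IsEvaluationAt k π) (hπ : Valued.v π < 1)
    (he : ∀ i, Valued.v (e i) ≤ 1)
    (hindep : LinearIndependent k ((closedBallSubmodule k (Valued.v π)).mkQ ∘ e))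
    {s : Finset ι} {g : ι → k⟦X⟧} (hg : ∑ i ∈ s, g i • e i = 0) {i : ι} (hi : i ∈ s) :
    X ∣ g i := by
  choose w hw hgw using fun i => h.exists_eq_add_mul hπ (g i)
  have hsum : ∑ i ∈ s, constantCoeff (g i) • e i = -(π * ∑ i ∈ s, w i * e i) := by
    rw [eq_neg_iff_add_eq_zero, ← hg, Finset.mul_sum, ← Finset.sum_add_distrib]
    refine Finset.sum_congr rfl fun i _ => ?_
    rw [Algebra.smul_def, Algebra.smul_def, hgw]
    ring
  have hmem : ∑ i ∈ s, constantCoeff (g i) • e i ∈ closedBallSubmodule k (Valued.v π) := by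
    change Valued.v _ ≤ _
    rw [hsum, Valuation.map_neg, map_mul]
    refine mul_le_of_le_one_right' (Valuation.map_sum_le _ fun i _ => ?_)
    rw [map_mul]
    exact mul_le_one' (hw i) (he i)
  refine X_dvd_iff.2 (linearIndependent_iff'.1 hindep s (fun i => constantCoeff (g i)) ?_ i hi)
  simp only [Function.comp_apply, ← map_smul, ← map_sum]
  exact (Submodule.Quotient.mk_eq_zero _).2 hmem

theorem IsEvaluationAt.linearIndependent (h : IsEvaluationAt k π) (hπ0 : π ≠ 0)
    (hπ : Valued.v π < 1) (he : ∀ i, Valued.v (e i) ≤ 1)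
    (hindep : LinearIndependent k ((closedBallSubmodule k (Valued.v π)).mkQ ∘ e)) :
    LinearIndependent k⟦X⟧ e := by
  refine linearIndependent_iff'.2 fun s g hg i hi => ?_
  have hdvd (n : ℕ) : ∀ g : ι → k⟦X⟧, ∑ i ∈ s, g i • e i = 0 → ∀ i ∈ s, X ^ n ∣ g i := by
    induction n with
    | zero => simp
    | succ n ih =>
      intro g hg
      choose! g' hg' using fun i (hi : i ∈ s) => h.X_dvd_of_sum_smul_eq_zero hπ he hindep hg hi
      have hsum : π * ∑ i ∈ s, g' i • e i = 0 := by
        rw [← hg, Finset.mul_sum]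
        refine Finset.sum_congr rfl fun i hi => ?_
        rw [hg' i hi, mul_smul, Algebra.smul_def X, h.algebraMap_X]
      intro i hi
      rw [hg' i hi, pow_succ']
      exact mul_dvd_mul_left X (ih g' ((mul_eq_zero.1 hsum).resolve_left hπ0) i hi)
  ext n
  exact X_pow_dvd_iff.1 (hdvd (n + 1) g hg i hi) n n.lt_succ_self

end Evaluation

section FunctionField

open IntermediateField

theorem isIntegral_of_mem_of_fg_span {R A : Type*} [CommRing R] [CommRing A] [Algebra R A]
    {M : Submonoid A} (hfg : (Submodule.span R (M : Set A)).FG) {y : A} (hy : y ∈ M) :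
    IsIntegral R y := by
  refine IsIntegral.of_mem_of_fg (Algebra.adjoin R (M : Set A)) ?_ y (Algebra.subset_adjoin hy)
  rwa [Algebra.adjoin_eq_span, Submonoid.closure_eq]

variable {Ω : Type*} [Field Ω]

theorem isAlgebraic_algebraMap_of_finite {k : Type*} (F : Type*) [Field k] [Finite k] [Field F]
    [Algebra k Ω] [Algebra F Ω] (c : k) : IsAlgebraic F (algebraMap k Ω c) := by
  have := Fintype.ofFinite k
  refine .of_pow (n := Fintype.card k - 1) (Nat.sub_pos_of_lt Fintype.one_lt_card) ?_
  rcases eq_or_ne c 0 with rfl | hc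
  · rw [map_zero]
    exact isAlgebraic_zero.pow _
  · rw [← map_pow, FiniteField.pow_card_sub_one_eq_one c hc, map_one]
    exact isAlgebraic_one

variable {K : Subfield Ω} {x : Ω}

theorem exists_finiteDimensional_intermediateField {F : Type*} [Field F] [Algebra F Ω]
    (hx : IsAlgebraic F x) (hfg : (Submodule.span (Subfield.closure {x}) (K : Set Ω)).FG) :
    ∃ E : IntermediateField F Ω, FiniteDimensional F E ∧ (K : Set Ω) ⊆ E := by
  obtain ⟨S, hSK, hS⟩ := Submodule.fg_span_iff_fg_span_finset_subset _ |>.1 hfg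
  have hxF (r : Subfield.closure {x}) : IsAlgebraic F (r : Ω) := by
    have hle : Subfield.closure {x} ≤ (algebraicClosure F Ω).toSubfield :=
      Subfield.closure_le.2 (Set.singleton_subset_iff.2 (mem_algebraicClosure_iff.2 hx))
    exact mem_algebraicClosure_iff.1 (hle r.2)
  have hSF (s : Ω) (hs : s ∈ S) : IsAlgebraic F s :=
    isAlgebraic_of_forall_isAlgebraic_algebraMap hxF
      (isIntegral_of_mem_of_fg_span (M := K.toSubmonoid) hfg (hSK hs)).isAlgebraic
  let E := adjoin F (insert x (S : Set Ω))
  have hxE : Subfield.closure {x} ≤ E.toSubfield :=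
    Subfield.closure_le.2 (Set.singleton_subset_iff.2 (subset_adjoin F _ (Set.mem_insert x _)))
  refine ⟨E, ?_, fun y hy => ?_⟩
  · have := (S.finite_toSet.insert x).to_subtype
    refine finiteDimensional_adjoin fun y hy => IsAlgebraic.isIntegral ?_
    rcases hy with rfl | hy
    exacts [hx, hSF y hy]
  · replace hy : y ∈ Submodule.span (Subfield.closure {x}) (S : Set Ω) :=
      hS ▸ Submodule.subset_span hy
    induction hy using Submodule.span_induction with
    | mem s hs => exact subset_adjoin F _ (Set.mem_insert_of_mem x hs)
    | zero => exact E.zero_mem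
    | add a b _ _ ha hb => exact E.add_mem ha hb
    | smul c a _ ha => exact E.mul_mem (hxE c.2) ha

variable {k : Type*} [Field k] [Algebra k Ω] [Algebra (RatFunc k) Ω] [IsScalarTower k (RatFunc k) Ω]

theorem adjoin_algebraMap_ratFunc_X : k⟮algebraMap (RatFunc k) Ω RatFunc.X⟯ =
    (IsScalarTower.toAlgHom k (RatFunc k) Ω).fieldRange := by
  rw [AlgHom.fieldRange_eq_map, ← RatFunc.adjoin_X, adjoin_map, Set.image_singleton]
  rfl

theorem transcendental_algebraMap_ratFunc_X :
    Transcendental k (algebraMap (RatFunc k) Ω RatFunc.X) :=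
  (transcendental_algebraMap_iff (algebraMap (RatFunc k) Ω).injective).2 RatFunc.transcendental_X

-- The exchange property of algebraic dependence, applied to `x` and the image of `X`.
theorem isAlgebraic_ratFunc_of_isAlgebraic_closure
    (h : IsAlgebraic (Subfield.closure {x}) (algebraMap (RatFunc k) Ω RatFunc.X)) :
    IsAlgebraic (RatFunc k) x := by
  have hX : IsAlgebraic k⟮x⟯ (algebraMap (RatFunc k) Ω RatFunc.X) := by
    have hle : Subfield.closure {x} ≤ k⟮x⟯.toSubfield :=
      Subfield.closure_le.2 (Set.singleton_subset_iff.2 (mem_adjoin_simple_self k x))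
    exact isAlgebraic_of_forall_isAlgebraic_algebraMap
      (fun r : Subfield.closure {x} => isAlgebraic_algebraMap (⟨r, hle r.2⟩ : k⟮x⟯)) h
  have hx : IsAlgebraic k⟮algebraMap (RatFunc k) Ω RatFunc.X⟯ x := by
    by_cases hxk : IsAlgebraic k x
    · exact hxk.tower_top _
    · exact isAlgebraic_adjoin_iff.2 (IsAlgebraic.adjoin_singleton hxk
        transcendental_algebraMap_ratFunc_X (isAlgebraic_adjoin_iff.1 hX))
  refine isAlgebraic_of_forall_isAlgebraic_algebraMap (fun r => ?_) hx
  obtain ⟨f, hf⟩ := adjoin_algebraMap_ratFunc_X.le r.2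
  rw [IntermediateField.algebraMap_apply, ← hf]
  exact isAlgebraic_algebraMap f

theorem isAlgebraic_ratFunc_of_fg_span
    (hfg : (Submodule.span (Subfield.closure {x}) (K : Set Ω)).FG)
    (hX : IsAlgebraic K (algebraMap (RatFunc k) Ω RatFunc.X)) : IsAlgebraic (RatFunc k) x :=
  isAlgebraic_ratFunc_of_isAlgebraic_closure (isAlgebraic_of_forall_isAlgebraic_algebraMap
    (fun r => (isIntegral_of_mem_of_fg_span (M := K.toSubmonoid) hfg r.2).isAlgebraic) hX)

theorem isAlgebraic_subfield_iff_isAlgebraic_ratFunc [Finite k]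
    (hfg : (Submodule.span (Subfield.closure {x}) (K : Set Ω)).FG)
    (hX : IsAlgebraic K (algebraMap (RatFunc k) Ω RatFunc.X)) {z : Ω} :
    IsAlgebraic K z ↔ IsAlgebraic (RatFunc k) z := by
  constructor <;> refine isAlgebraic_of_forall_isAlgebraic_algebraMap fun r => ?_
  · obtain ⟨E, _, hKE⟩ :=
      exists_finiteDimensional_intermediateField (isAlgebraic_ratFunc_of_fg_span hfg hX) hfg
    exact isAlgebraic_iff.1 (Algebra.IsAlgebraic.isAlgebraic (⟨r, hKE r.2⟩ : E))
  · have hmem : algebraMap (RatFunc k) Ω r ∈ k⟮algebraMap (RatFunc k) Ω RatFunc.X⟯ :=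
      adjoin_algebraMap_ratFunc_X.ge ⟨r, rfl⟩
    generalize algebraMap (RatFunc k) Ω r = y at hmem
    induction hmem using adjoin_induction with
    | mem y hy => exact Set.mem_singleton_iff.1 hy ▸ hX
    | algebraMap c => exact isAlgebraic_algebraMap_of_finite K c
    | add a b _ _ ha hb => exact ha.add hb
    | inv a _ ha => exact ha.inv
    | mul a b _ _ ha hb => exact ha.mul hb

end FunctionField

section DigitSpace

open PowerSeries
open scoped LaurentSeries RatFunc

variable {k : Type*} [Field k] [Algebra k Kv] {π : Kv} {W : Submodule k Kv}

section TrivialOn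

variable [(Valued.v : Valuation Kv ZM0).IsTrivialOn k]

theorem IsCompleteSetOfReps.disjoint_closedBallSubmodule (hW : IsCompleteSetOfReps π (W : Set Kv)) :
    Disjoint W (closedBallSubmodule k (Valued.v π)) := by
  refine Submodule.disjoint_def.2 fun x hxW hx => ?_
  have hx' : Valued.v x ≤ Valued.v π := hx
  exact (hW.2 0 (by simp)).unique ⟨hxW, by simpa using hx'⟩ ⟨W.zero_mem, by simp⟩

theorem IsCompleteSetOfReps.linearIndependent_mkQ (hW : IsCompleteSetOfReps π (W : Set Kv))
    {ι : Type*} {w : ι → W} (hw : LinearIndependent k w) :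
    LinearIndependent k ((closedBallSubmodule k (Valued.v π)).mkQ ∘ fun i => (w i : Kv)) := by
  refine (hw.map' W.subtype W.ker_subtype).map ?_
  rw [Submodule.ker_mkQ]
  refine hW.disjoint_closedBallSubmodule.mono_left (Submodule.span_le.2 ?_)
  rintro _ ⟨i, rfl⟩
  exact (w i).2

variable [CompleteSpace Kv] [Algebra k⟦X⟧ Kv]

theorem IsEvaluationAt.tsum_coe_mul_pow (h : IsEvaluationAt k π) (hπ : Valued.v π < 1)
    {ι : Type*} [Fintype ι] (b : Module.Basis ι k W) (γ : ℕ → W) :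
    ∑' n, (γ n : Kv) * π ^ n = ∑ i, (mk fun n => b.repr (γ n) i) • (b i : Kv) := by
  have hγ (n : ℕ) : (γ n : Kv) * π ^ n =
      ∑ i, algebraMap k Kv (b.repr (γ n) i) * π ^ n * (b i : Kv) := by
    nth_rw 1 [← b.sum_repr (γ n)]
    simp only [Submodule.coe_sum, Submodule.coe_smul, Algebra.smul_def, Finset.sum_mul,
      mul_right_comm]
  rw [tsum_congr hγ, Summable.tsum_finsetSum fun i _ => (summable_mul_pow hπ (by simp)).mul_right _]
  refine Finset.sum_congr rfl fun i _ => ?_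
  rw [tsum_mul_right, Algebra.smul_def, h]
  simp only [coeff_mk]

variable [Algebra k⸨X⸩ Kv] [IsScalarTower k⟦X⟧ k⸨X⸩ Kv]

theorem IsEvaluationAt.mem_span_range_basis (h : IsEvaluationAt k π) (hπ0 : π ≠ 0)
    (hπ : Valued.v π < 1) (hW : IsCompleteSetOfReps π (W : Set Kv)) {ι : Type*} [Finite ι]
    (b : Module.Basis ι k W) (x : Kv) :
    x ∈ Submodule.span k⸨X⸩ (Set.range fun i => (b i : Kv)) := by
  have := Fintype.ofFinite ι
  obtain ⟨n, hn⟩ : ∃ n : ℕ, Valued.v (π ^ n * x) ≤ 1 := by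
    have hlim := (Valued.tendsto_zero_pow_of_v_lt_one hπ).mul_const x
    rw [zero_mul] at hlim
    exact (hlim.eventually_mem ((Valued.isOpen_integer Kv).mem_nhds (zero_mem _))).exists
  obtain ⟨γ, hγ⟩ := hW.exists_tsum_eq hπ0 hπ hn
  have hmem : π ^ n * x ∈ Submodule.span k⸨X⸩ (Set.range fun i => (b i : Kv)) := by
    rw [← hγ, h.tsum_coe_mul_pow hπ b γ]
    refine sum_mem fun i _ => ?_
    rw [← algebraMap_smul k⸨X⸩]
    exact Submodule.smul_mem _ _ (Submodule.subset_span ⟨i, rfl⟩)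
  have hX : algebraMap k⸨X⸩ Kv (algebraMap k⟦X⟧ k⸨X⸩ X) = π := by
    rw [← IsScalarTower.algebraMap_apply, h.algebraMap_X]
  have hx : (algebraMap k⟦X⟧ k⸨X⸩ X ^ n)⁻¹ • (π ^ n * x) = x := by
    rw [Algebra.smul_def, map_inv₀, map_pow, hX, inv_mul_cancel_left₀ (pow_ne_zero n hπ0)]
  exact hx ▸ Submodule.smul_mem _ _ hmem

theorem IsEvaluationAt.exists_basis (h : IsEvaluationAt k π) (hπ0 : π ≠ 0)
    (hπ : Valued.v π < 1) (hW : IsCompleteSetOfReps π (W : Set Kv)) {ι : Type*} [Finite ι]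
    (b : Module.Basis ι k W) : ∃ B : Module.Basis ι k⸨X⸩ Kv, ∀ i, B i = b i :=
  ⟨.mk ((LinearIndependent.iff_fractionRing k⟦X⟧ k⸨X⸩).1 (h.linearIndependent hπ0 hπ
    (fun i => hW.1 _ (b i).2) (hW.linearIndependent_mkQ b.linearIndependent)))
    fun x _ => h.mem_span_range_basis hπ0 hπ hW b x, Module.Basis.mk_apply _ _⟩

variable [Algebra (RatFunc k) Kv] [IsScalarTower (RatFunc k) k⸨X⸩ Kv]

-- Approximating a basis of `W` modulo `π` by elements of `E` preserves its independence.
theorem IsEvaluationAt.finiteDimensional (h : IsEvaluationAt k π) (hπ0 : π ≠ 0)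
    (hπ : Valued.v π < 1) (hW : IsCompleteSetOfReps π (W : Set Kv))
    {E : Submodule (RatFunc k) Kv} [FiniteDimensional (RatFunc k) E] (hE : Dense (E : Set Kv)) :
    FiniteDimensional k W := by
  have happrox (w : W) : ∃ e : E, Valued.v ((e : Kv) - w) ≤ Valued.v π := by
    have hopen : IsOpen {x : Kv | Valued.v (x - w) ≤ Valued.v π} := by
      simp only [← Valuation.restrict_le_iff (v := (Valued.v : Valuation Kv ZM0))]
      exact (Valued.isOpen_closedBall Kv ((Valuation.ne_zero_iff _).2 hπ0)).preimage
        (continuous_id.sub continuous_const)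
    obtain ⟨e, heE, he⟩ := hE.exists_mem_open hopen ⟨w, by simp⟩
    exact ⟨⟨e, heE⟩, he⟩
  choose e he using happrox
  suffices hrank : Module.rank k W ≤ Module.finrank (RatFunc k) E from
    Module.rank_lt_aleph0_iff.1 (hrank.trans_lt Cardinal.natCast_lt_aleph0)
  refine rank_le fun s hs => ?_
  have hmod : (closedBallSubmodule k (Valued.v π)).mkQ ∘ (fun w : s => (e w : Kv)) =
      (closedBallSubmodule k (Valued.v π)).mkQ ∘ fun w : s => ((w : W) : Kv) :=
    funext fun w => (Submodule.Quotient.eq _).2 (he w)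
  have hint (w : s) : Valued.v (e w : Kv) ≤ 1 := by
    rw [← sub_add_cancel (e w : Kv) (w : W)]
    exact Valuation.map_add_le _ ((he w).trans hπ.le) (hW.1 _ (w : W).2)
  have hindep : LinearIndependent k⸨X⸩ fun w : s => (e w : Kv) :=
    (LinearIndependent.iff_fractionRing k⟦X⟧ k⸨X⸩).1 <| h.linearIndependent hπ0 hπ hint <|
      hmod ▸ hW.linearIndependent_mkQ hs
  have hindep' : LinearIndependent (RatFunc k) fun w : s => (e w : E) :=
    .of_comp E.subtype (hindep.restrict_scalars' (RatFunc k))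
  simpa using hindep'.fintype_card_le_finrank

end TrivialOn

section Finite

variable [Fintype k] [CompleteSpace Kv] [Algebra k⟦X⟧ Kv] [Algebra k⸨X⸩ Kv]
  [IsScalarTower k⟦X⟧ k⸨X⸩ Kv] [Algebra (RatFunc k) Kv] [IsScalarTower (RatFunc k) k⸨X⸩ Kv]

theorem IsEvaluationAt.isAlgebraic_tsum_iff_isKAutomatic (h : IsEvaluationAt k π) (hπ0 : π ≠ 0)
    (hπ : Valued.v π < 1) (hW : IsCompleteSetOfReps π (W : Set Kv)) [FiniteDimensional k W]
    (hWalg : ∀ w ∈ W, IsAlgebraic (RatFunc k) w) (γ : ℕ → W) :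
    IsAlgebraic (RatFunc k) (∑' n, (γ n : Kv) * π ^ n) ↔ IsKAutomatic (Fintype.card k) γ := by
  let b := Module.finBasis k W
  obtain ⟨B, hB⟩ := h.exists_basis hπ0 hπ hW b
  have hsum : ∑' n, (γ n : Kv) * π ^ n =
      ∑ i, algebraMap k⟦X⟧ k⸨X⸩ (mk fun n => b.repr (γ n) i) • B i := by
    simp only [h.tsum_coe_mul_pow hπ b γ, hB, algebraMap_smul]
  calc IsAlgebraic (RatFunc k) (∑' n, (γ n : Kv) * π ^ n)
    _ ↔ ∀ i, IsAlgebraic (RatFunc k) (algebraMap k⟦X⟧ k⸨X⸩ (mk fun n => b.repr (γ n) i)) := by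
      rw [hsum, isAlgebraic_sum_smul_basis_iff B fun i => hB i ▸ hWalg _ (b i).2]
    _ ↔ ∀ i, IsKAutomatic (Fintype.card k) fun n => b.equivFun (γ n) i := by
      simp only [isAlgebraic_iff_isKAutomatic_coeff, coeff_mk, Module.Basis.equivFun_apply]
    _ ↔ IsKAutomatic (Fintype.card k) γ := by
      rw [← isKAutomatic_pi_iff, isKAutomatic_comp_iff b.equivFun.injective]

theorem IsEvaluationAt.isAlgebraic_subfield_tsum_iff_isKAutomatic [IsScalarTower k (RatFunc k) Kv]
    (h : IsEvaluationAt k π) (hπ0 : π ≠ 0) (hπ : Valued.v π < 1)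
    (hW : IsCompleteSetOfReps π (W : Set Kv)) {K : Subfield Kv} (hK : Dense (K : Set Kv)) {x : Kv}
    (hfg : (Submodule.span (Subfield.closure {x}) (K : Set Kv)).FG) (hπalg : IsAlgebraic K π)
    (hWalg : ∀ w ∈ W, IsAlgebraic K w) (γ : ℕ → W) :
    IsAlgebraic K (∑' n, (γ n : Kv) * π ^ n) ↔ IsKAutomatic (Fintype.card k) γ := by
  rw [← h.algebraMap_ratFunc_X] at hπalg
  obtain ⟨E, _, hKE⟩ :=
    exists_finiteDimensional_intermediateField (isAlgebraic_ratFunc_of_fg_span hfg hπalg) hfg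
  have : FiniteDimensional k W :=
    h.finiteDimensional hπ0 hπ hW (E := E.toSubmodule) (hK.mono hKE)
  have halg {z : Kv} := isAlgebraic_subfield_iff_isAlgebraic_ratFunc hfg hπalg (z := z)
  rw [halg, h.isAlgebraic_tsum_iff_isKAutomatic hπ0 hπ hW fun w hw => halg.1 (hWalg w hw)]

end Finite

end DigitSpace

section PropertyB

open PowerSeries
open scoped LaurentSeries RatFunc

variable {π : Kv} {Γ : Set Kv} {K : Subfield Kv}

theorem exists_submodule_zmod_coe_eq {p : ℕ} [NeZero p] {M : Type*} [AddCommGroup M]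
    [Module (ZMod p) M] {S : Set M} (hS : S.Nonempty) (hadd : ∀ a ∈ S, ∀ b ∈ S, a + b ∈ S) :
    ∃ W : Submodule (ZMod p) M, (W : Set M) = S := by
  have hnsmul {n : ℕ} (hn : n ≠ 0) {a : M} (ha : a ∈ S) : n • a ∈ S := by
    induction n, Nat.pos_of_ne_zero hn using Nat.le_induction with
    | base => simpa using ha
    | succ n hpos ih => exact succ_nsmul a n ▸ hadd _ (ih (Nat.ne_of_gt hpos)) a ha
  have hsmul (c : ZMod p) {a : M} (ha : a ∈ S) : c • a ∈ S := by
    have hc : c • a = (c.val + p) • a := by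
      rw [← Nat.cast_smul_eq_nsmul (ZMod p)]
      simp
    exact hc ▸ hnsmul (by simp [NeZero.ne p]) ha
  obtain ⟨a, ha⟩ := hS
  exact ⟨{
    carrier := S
    add_mem' := fun ha hb => hadd _ ha _ hb
    zero_mem' := zero_smul (ZMod p) a ▸ hsmul 0 ha
    smul_mem' := fun c _ => hsmul c }, rfl⟩

theorem IsCompleteSetOfReps.nonempty (hΓ : IsCompleteSetOfReps π Γ) : Γ.Nonempty :=
  let ⟨γ, ⟨hγ, _⟩, _⟩ := hΓ.2 0 (by simp)
  ⟨γ, hγ⟩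

theorem IsCompleteSetOfReps.add_const (hΓ : IsCompleteSetOfReps π Γ) {ξ : Kv}
    (hξ : Valued.v ξ ≤ 1) : IsCompleteSetOfReps π ((fun γ => γ + ξ) '' Γ) := by
  refine ⟨?_, fun x hx => ?_⟩
  · rintro _ ⟨γ, hγ, rfl⟩
    exact Valuation.map_add_le _ (hΓ.1 γ hγ) hξ
  · obtain ⟨γ, ⟨hγ, hle⟩, huniq⟩ := hΓ.2 (x - ξ) (Valuation.map_sub_le _ hx hξ)
    refine ⟨γ + ξ, ⟨⟨γ, hγ, rfl⟩, by rwa [add_comm, ← sub_sub]⟩, ?_⟩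
    rintro _ ⟨⟨δ, hδ, rfl⟩, hδle⟩
    exact congrArg (· + ξ) (huniq δ ⟨hδ, by rwa [sub_sub, add_comm]⟩)

theorem IsExpansion.eq_zpow_mul_tsum {m : ℤ} {a : ℤ → Kv} {x : Kv} (h : IsExpansion π Γ m a x)
    (hπ0 : π ≠ 0) : x = π ^ m * ∑' n : ℕ, a (m + n) * π ^ n := by
  rw [← h.2.tsum_eq, ← tsum_mul_left]
  refine tsum_congr fun n => ?_
  rw [zpow_add₀ hπ0, zpow_natCast, mul_left_comm]

variable [CompleteSpace Kv]

theorem IsCompleteSetOfReps.isAlgebraic_tsum_iff_isKAutomatic {k : Type*} [Field k] [Fintype k]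
    [Algebra k Kv] {W : Submodule k Kv} (hW : IsCompleteSetOfReps π (W : Set Kv)) (hπ0 : π ≠ 0)
    (hπ : Valued.v π < 1) (hK : Dense (K : Set Kv)) {x : Kv}
    (hfg : (Submodule.span (Subfield.closure {x}) (K : Set Kv)).FG) (hπalg : IsAlgebraic K π)
    (hWalg : ∀ w ∈ W, IsAlgebraic K w) (γ : ℕ → W) :
    IsAlgebraic K (∑' n, (γ n : Kv) * π ^ n) ↔ IsKAutomatic (Fintype.card k) γ := by
  let _ : Algebra k⟦X⟧ Kv := (evaluationHom k hπ).toAlgebra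
  have heval : IsEvaluationAt k π := fun _ => rfl
  let _ : Algebra k⸨X⸩ Kv := (IsFractionRing.lift (heval.algebraMap_injective hπ0)).toAlgebra
  let _ : Algebra (RatFunc k) Kv :=
    ((algebraMap k⸨X⸩ Kv).comp (algebraMap (RatFunc k) k⸨X⸩)).toAlgebra
  have : IsScalarTower k⟦X⟧ k⸨X⸩ Kv :=
    .of_algebraMap_eq fun G => (IsFractionRing.lift_algebraMap _ G).symm
  have : IsScalarTower (RatFunc k) k⸨X⸩ Kv := .of_algebraMap_eq fun _ => rfl
  have : IsScalarTower k (RatFunc k) Kv := .of_algebraMap_eq fun c => by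
    rw [← heval.algebraMap_C, IsScalarTower.algebraMap_apply k⟦X⟧ k⸨X⸩ Kv,
      IsScalarTower.algebraMap_apply (RatFunc k) k⸨X⸩ Kv]
    exact congrArg _ ((congrArg _ (Polynomial.coe_C c)).symm.trans (RatFunc.coe_coe (.C c)))
  exact heval.isAlgebraic_subfield_tsum_iff_isKAutomatic hπ0 hπ hW hK hfg hπalg hWalg γ

theorem IsExpansion.sub_const {m : ℤ} {a : ℤ → Kv} {x ξ : Kv}
    (h : IsExpansion π ((fun γ => γ + ξ) '' Γ) m a x) (hπ0 : π ≠ 0) (hπ : Valued.v π < 1)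
    (hξ : Valued.v ξ ≤ 1) :
    IsExpansion π Γ m (fun n => a n - ξ) (x - π ^ m * (ξ / (1 - π))) := by
  refine ⟨fun n hn => ?_, ?_⟩
  · obtain ⟨γ, hγ, hγa⟩ := h.1 n hn
    simpa only [← hγa, add_sub_cancel_right] using hγ
  · rw [← tsum_const_mul_pow hπ hξ]
    have hterm (n : ℕ) : (a (m + n) - ξ) * π ^ (m + (n : ℤ)) =
        a (m + n) * π ^ (m + (n : ℤ)) - π ^ m * (ξ * π ^ n) := by
      rw [zpow_add₀ hπ0, zpow_natCast]
      ring
    simp only [hterm]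
    exact h.2.sub ((summable_mul_pow hπ fun _ => hξ).hasSum.mul_left (π ^ m))

theorem HasPropertyB.add_const {p : ℕ} (hB : HasPropertyB p K π Γ) (hπ0 : π ≠ 0)
    (hπ : Valued.v π < 1) (hπalg : IsAlgebraic K π) {ξ : Kv} (hξ : Valued.v ξ ≤ 1)
    (hξalg : IsAlgebraic K ξ) : HasPropertyB p K π ((fun γ => γ + ξ) '' Γ) := by
  intro x m a ha
  have hc : π ^ m * (ξ / (1 - π)) ∈ algebraicClosure K Kv := by
    rw [← mem_algebraicClosure_iff] at hπalg hξalg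
    exact mul_mem (zpow_mem hπalg m) (div_mem hξalg (sub_mem (one_mem _) hπalg))
  calc IsAlgebraic K x
    _ ↔ IsAlgebraic K (x - π ^ m * (ξ / (1 - π))) := by
      rw [← mem_algebraicClosure_iff, ← mem_algebraicClosure_iff, sub_eq_add_neg x,
        add_mem_cancel_right (neg_mem hc)]
    _ ↔ IsKAutomatic p fun n : ℕ => a (m + n) - ξ := hB _ m _ (ha.sub_const hπ0 hπ hξ)
    _ ↔ IsKAutomatic p fun n : ℕ => a (m + n) :=
      isKAutomatic_comp_iff (sub_left_injective (b := ξ))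

theorem IsCompleteSetOfReps.hasPropertyB_of_add_mem {p : ℕ} [Fact p.Prime] [CharP Kv p]
    (hΓ : IsCompleteSetOfReps π Γ) (hadd : ∀ μ ∈ Γ, ∀ ν ∈ Γ, μ + ν ∈ Γ) (hπ0 : π ≠ 0)
    (hπ : Valued.v π < 1) (hK : Dense (K : Set Kv)) {x₀ : Kv}
    (hfg : (Submodule.span (Subfield.closure {x₀}) (K : Set Kv)).FG) (hπalg : IsAlgebraic K π)
    (hΓalg : ∀ γ ∈ Γ, IsAlgebraic K γ) : HasPropertyB p K π Γ := by
  intro x m a ha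
  let _ : Algebra (ZMod p) Kv := ZMod.algebra Kv p
  obtain ⟨W, rfl⟩ := exists_submodule_zmod_coe_eq (p := p) hΓ.nonempty hadd
  let γ (n : ℕ) : W := ⟨a (m + n), ha.1 _ (by lia)⟩
  have hπm : IsAlgebraic K (π ^ m) :=
    mem_algebraicClosure_iff.1 (zpow_mem (mem_algebraicClosure_iff.2 hπalg) m)
  calc IsAlgebraic K x
    _ ↔ IsAlgebraic K (∑' n, (γ n : Kv) * π ^ n) := by
      rw [ha.eq_zpow_mul_tsum hπ0]
      exact ⟨.of_mul (mem_nonZeroDivisors_of_ne_zero (zpow_ne_zero m hπ0)) hπm, hπm.mul⟩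
    _ ↔ IsKAutomatic p γ := by
      rw [hΓ.isAlgebraic_tsum_iff_isKAutomatic hπ0 hπ hK hfg hπalg hΓalg, ZMod.card]
    _ ↔ IsKAutomatic p fun n : ℕ => a (m + n) :=
      (isKAutomatic_comp_iff Subtype.val_injective).symm

end PropertyB

/-- Suppose `Γ` is additively closed with `π` and all elements of `Γ` algebraic
over `K`, and let `ξ ∈ A_v` be algebraic over `K`.  Then the translate
`Γ + ξ = {γ + ξ : γ ∈ Γ}` is a complete set of representatives of `A_v/πA_v`
and `(Γ + ξ, π)` has property B. -/
theorem propertyB_of_translate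
    {Kv : Type*} [Field Kv] [Valued Kv ZM0]
    (p : ℕ) [Fact p.Prime] (K : Subfield Kv)
    (hK : IsGlobalFunctionFieldCompletion p K)
    (π : Kv) (hπ0 : π ≠ 0) (hπ : Valued.v π < 1)
    (Γ : Set Kv) (hΓ : IsCompleteSetOfReps π Γ)
    (hadd : ∀ μ ∈ Γ, ∀ ν ∈ Γ, μ + ν ∈ Γ)
    (hπalg : IsAlgebraic ↥K π) (hΓalg : ∀ γ ∈ Γ, IsAlgebraic ↥K γ)
    (ξ : Kv) (hξA : Valued.v ξ ≤ 1) (hξalg : IsAlgebraic ↥K ξ) :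
    IsCompleteSetOfReps π ((fun γ => γ + ξ) '' Γ) ∧
      HasPropertyB p K π ((fun γ => γ + ξ) '' Γ) := by
  have := hK.charP
  have := hK.complete
  obtain ⟨x₀, -, -, hdeg⟩ := hK.globalFunctionField
  have hfg : (Submodule.span (Subfield.closure {x₀}) (K : Set Kv)).FG :=
    Module.Finite.iff_fg.1 (Module.rank_lt_aleph0_iff.1 hdeg)
  have hB : HasPropertyB p K π Γ :=
    hΓ.hasPropertyB_of_add_mem hadd hπ0 hπ hK.dense hfg hπalg hΓalg
  exact ⟨hΓ.add_const hξA, hB.add_const hπ0 hπ hπalg hξA hξalg⟩
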